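/- Let 1 < p < Q, let a ∈ ℝ with Q ≠ ap, and let 1/p + 1/q = 1. For every smooth compactly supported function f on ℍⁿ \ {0}, it holds that (|Q − ap|/p) · ∫_{ℍⁿ} (|z|^p/d^p) · (|f|^p/d^{ap}) dξ ≤ (∫_{ℍⁿ} |∇_H f|^p / d^{ap} dξ)^{1/p} · (∫_{ℍⁿ} (|z|^p/d^p) · (|f|^p/d^{ap}) · d^q dξ)^{1/q}. -/

import Mathlib

open MeasureTheory Real

noncomputable section

/-- The underlying space of the Heisenberg group `ℍⁿ = ℝⁿ × ℝⁿ × ℝ`,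
with points `ξ = (x, y, t)` and `z = (x, y)`. -/
abbrev Heis (n : ℕ) : Type := (Fin n → ℝ) × (Fin n → ℝ) × ℝ

/-- The left-invariant horizontal vector field `X_j = ∂/∂x_j + 2 y_j ∂/∂t`. -/
noncomputable def XH {n : ℕ} (j : Fin n) (f : Heis n → ℝ) (ξ : Heis n) : ℝ :=
  fderiv ℝ f ξ (Pi.single j 1, 0, 0) + 2 * ξ.2.1 j * fderiv ℝ f ξ (0, 0, 1)

/-- The left-invariant horizontal vector field `Y_j = ∂/∂y_j − 2 x_j ∂/∂t`. -/
noncomputable def YH {n : ℕ} (j : Fin n) (f : Heis n → ℝ) (ξ : Heis n) : ℝ :=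
  fderiv ℝ f ξ (0, Pi.single j 1, 0) - 2 * ξ.1 j * fderiv ℝ f ξ (0, 0, 1)

/-- The horizontal gradient `∇_H f = (X_1 f, …, X_n f, Y_1 f, …, Y_n f)`. -/
noncomputable def hGrad {n : ℕ} (f : Heis n → ℝ) (ξ : Heis n) : (Fin n → ℝ) × (Fin n → ℝ) :=
  (fun j => XH j f ξ, fun j => YH j f ξ)

/-- Euclidean length of a horizontal vector. -/
noncomputable def hNorm {n : ℕ} (v : (Fin n → ℝ) × (Fin n → ℝ)) : ℝ :=
  Real.sqrt (∑ j, v.1 j ^ 2 + ∑ j, v.2 j ^ 2)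

/-- Euclidean inner product of horizontal vectors. -/
noncomputable def hDot {n : ℕ} (v w : (Fin n → ℝ) × (Fin n → ℝ)) : ℝ :=
  ∑ j, v.1 j * w.1 j + ∑ j, v.2 j * w.2 j

/-- The horizontal divergence `div_H w = Σ_j (X_j w_j + Y_j w_{n+j})`. -/
noncomputable def hDiv {n : ℕ} (V : Heis n → (Fin n → ℝ) × (Fin n → ℝ)) (ξ : Heis n) : ℝ :=
  ∑ j, (XH j (fun η => (V η).1 j) ξ + YH j (fun η => (V η).2 j) ξ)

/-- The sub-Laplacian `Δ_H = Σ_j (X_j² + Y_j²) = div_H ∘ ∇_H`. -/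
noncomputable def hLap {n : ℕ} (f : Heis n → ℝ) : Heis n → ℝ :=
  hDiv (hGrad f)

/-- The `p`-sub-Laplacian `Δ_{H,p} f = div_H (|∇_H f|^{p−2} ∇_H f)`. -/
noncomputable def pLap {n : ℕ} (p : ℝ) (f : Heis n → ℝ) : Heis n → ℝ :=
  hDiv (fun ξ => hNorm (hGrad f ξ) ^ (p - 2) • hGrad f ξ)

/-- The Euclidean norm `|z|` of the horizontal component `z = (x, y)`. -/
noncomputable def zNorm {n : ℕ} (ξ : Heis n) : ℝ :=
  Real.sqrt (∑ j, ξ.1 j ^ 2 + ∑ j, ξ.2.1 j ^ 2)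

/-- The Heisenberg gauge `d(z, t) = (|z|⁴ + t²)^{1/4}`. -/
noncomputable def dH {n : ℕ} (ξ : Heis n) : ℝ :=
  ((∑ j, ξ.1 j ^ 2 + ∑ j, ξ.2.1 j ^ 2) ^ 2 + ξ.2.2 ^ 2) ^ (1 / 4 : ℝ)

/-- A smooth compactly supported function on `ℍⁿ \ {0}`. -/
def IsTestAwayZero {n : ℕ} (f : Heis n → ℝ) : Prop :=
  ContDiff ℝ (⊤ : ℕ∞) f ∧ HasCompactSupport f ∧ (0 : Heis n) ∉ tsupport f

/-!
Write `∂_E` and `∂_R` for the derivatives along the linear vector fields `E = (z, 2t)` and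
`R = (Jz, 0)`, `J(x, y) = (y, -x)`, which generate the dilations and the rotations about the
`t`-axis. The horizontal field `G = |z|² z + t Jz = d³ ∇_H d` satisfies `|G| = |z| d²` and
`G · ∇_H k = |z|² ∂_E k + t ∂_R k`. Now `E` has divergence `Q` and `|z|^r d^s` is homogeneous of
degree `r + s`, whereas `R` is divergence free and `t |z|^(r-2) d^s` is invariant under rotations,
so integration by parts gives `∫ |z|^(r-2) d^s G · ∇_H k = -(Q + r + s) ∫ |z|^r d^s k`. Here
`|z|^(r-2)` may be singular on the `t`-axis; in the rotation term it is the limit of the `C¹`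
functions `|z|^r / (|z|² + ε)`, which it dominates. Hardy's inequality follows by taking
`k = |f|^p` and `r = p` and applying the Cauchy–Schwarz inequality to `G · ∇_H k` and then Hölder's
inequality to the integral.
-/

theorem continuous_mul_of_continuousAt_tsupport {X M : Type*} [TopologicalSpace X]
    [TopologicalSpace M] [MulZeroClass M] [ContinuousMul M] {u w : X → M}
    (hu : Continuous u) (hw : ∀ x ∈ tsupport u, ContinuousAt w x) :
    Continuous fun x ↦ u x * w x :=
  continuous_of_tsupport fun x hx ↦
    hu.continuousAt.mul (hw x (closure_mono (Function.support_mul_subset_left u w) hx))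

theorem contDiff_mul_of_contDiffAt_tsupport {𝕜 E 𝔸 : Type*} [NontriviallyNormedField 𝕜]
    [NormedAddCommGroup E] [NormedSpace 𝕜 E] [NormedRing 𝔸] [NormedAlgebra 𝕜 𝔸]
    {m : WithTop ℕ∞} {u w : E → 𝔸} (hu : ContDiff 𝕜 m u)
    (hw : ∀ x ∈ tsupport u, ContDiffAt 𝕜 m w x) : ContDiff 𝕜 m fun x ↦ u x * w x := by
  rw [← contMDiff_iff_contDiff]
  exact contMDiff_of_tsupport fun x hx ↦ contMDiffAt_iff_contDiffAt.2 <|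
    hu.contDiffAt.mul (hw x (closure_mono (Function.support_mul_subset_left u w) hx))

theorem continuous_fderiv_apply_linearMap {E F : Type*} [NormedAddCommGroup E] [NormedSpace ℝ E]
    [FiniteDimensional ℝ E] [NormedAddCommGroup F] [NormedSpace ℝ F] {k : E → F}
    (hk : ContDiff ℝ 1 k) (A : E →ₗ[ℝ] E) : Continuous fun x ↦ fderiv ℝ k x (A x) :=
  (hk.continuous_fderiv one_ne_zero).clm_apply A.continuous_of_finiteDimensional

theorem rpow_sub_two_mul_sq {r u : ℝ} (hu : 0 ≤ u) (hr : r ≠ 0) : u ^ (r - 2) * u ^ 2 = u ^ r := by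
  rw [← Real.rpow_natCast, ← Real.rpow_add' hu (by simpa)]
  simp

theorem rpow_sub_two_mul_self {r u : ℝ} (hu : 0 ≤ u) (hr : 1 < r) :
    u ^ (r - 2) * u = u ^ (r - 1) := by
  have h : r - 2 + 1 = r - 1 := by ring
  rw [← h, Real.rpow_add_one' hu (by linarith)]

theorem rpow_div_sq_add_le {r u ε : ℝ} (hu : 0 ≤ u) (hr : r ≠ 0) (hε : 0 < ε) :
    u ^ r / (u ^ 2 + ε) ≤ u ^ (r - 2) := by
  rw [div_le_iff₀ (by positivity), mul_add, rpow_sub_two_mul_sq hu hr]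
  exact le_add_of_nonneg_right (by positivity)

theorem tendsto_rpow_div_sq_add {u : ℝ} (hu : 0 < u) (r : ℝ) :
    Filter.Tendsto (fun ε ↦ u ^ r / (u ^ 2 + ε)) (nhdsWithin 0 (Set.Ioi 0))
      (nhds (u ^ (r - 2))) := by
  have hcont : ContinuousAt (fun ε ↦ u ^ r / (u ^ 2 + ε)) 0 :=
    ContinuousAt.div (by fun_prop) (by fun_prop) (by positivity)
  have hlim : u ^ r / (u ^ 2 + 0) = u ^ (r - 2) := by
    rw [add_zero, Real.rpow_sub hu, Real.rpow_two]
  exact hlim ▸ hcont.tendsto.mono_left nhdsWithin_le_nhds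

section LinearVectorField

variable {E : Type*} [NormedAddCommGroup E] [NormedSpace ℝ E] [FiniteDimensional ℝ E]
  [MeasurableSpace E] [BorelSpace E] (μ : Measure E) [μ.IsAddHaarMeasure]

theorem integral_fderiv_apply_linearMap (A : E →ₗ[ℝ] E) {g : E → ℝ}
    (hg : ContDiff ℝ 1 g) (hgc : HasCompactSupport g) :
    ∫ x, fderiv ℝ g x (A x) ∂μ = -(LinearMap.trace ℝ E A) * ∫ x, g x ∂μ := by
  let b := Module.finBasis ℝ E
  let φ (i) : E →L[ℝ] ℝ := LinearMap.toContinuousLinearMap (b.coord i ∘ₗ A)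
  have hg' (i) : Continuous fun x ↦ fderiv ℝ g x (b i) :=
    (hg.continuous_fderiv one_ne_zero).clm_apply continuous_const
  have int_deriv (i) : Integrable (fun x ↦ φ i x * fderiv ℝ g x (b i)) μ :=
    ((φ i).continuous.mul (hg' i)).integrable_of_hasCompactSupport
      (hgc.fderiv_apply ℝ (b i)).mul_left
  have int_coord (i) : ∫ x, φ i x * fderiv ℝ g x (b i) ∂μ = -(φ i (b i) * ∫ x, g x ∂μ) := by
    rw [integral_mul_fderiv_eq_neg_fderiv_mul_of_integrable _ (int_deriv i)]
    · simp only [ContinuousLinearMap.fderiv, integral_const_mul]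
    · exact ((φ i).continuous.mul hg.continuous).integrable_of_hasCompactSupport hgc.mul_left
    · exact fun x _ ↦ (φ i).differentiableAt
    · exact fun x _ ↦ hg.differentiable one_ne_zero x
    · simpa only [ContinuousLinearMap.fderiv] using
        (hg.continuous.integrable_of_hasCompactSupport hgc).const_mul (φ i (b i))
  calc ∫ x, fderiv ℝ g x (A x) ∂μ = ∫ x, ∑ i, φ i x * fderiv ℝ g x (b i) ∂μ := by
        congr! with x
        conv_lhs => rw [← b.sum_repr (A x)]
        simp only [map_sum, map_smul, smul_eq_mul]
        rfl
    _ = -(∑ i, φ i (b i)) * ∫ x, g x ∂μ := by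
        rw [integral_finsetSum _ fun i _ ↦ int_deriv i]
        simp only [int_coord, Finset.sum_neg_distrib, ← Finset.sum_mul, neg_mul]
    _ = -(LinearMap.trace ℝ E A) * ∫ x, g x ∂μ := by
        rw [LinearMap.trace_eq_matrix_trace ℝ b, Matrix.trace]
        simp only [Matrix.diag_apply, LinearMap.toMatrix_apply]
        rfl

theorem integrable_mul_fderiv_apply_linearMap (A : E →ₗ[ℝ] E) {w k : E → ℝ}
    (hk : ContDiff ℝ 1 k) (hkc : HasCompactSupport k) (hw : ∀ x ∈ tsupport k, ContinuousAt w x) :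
    Integrable (fun x ↦ w x * fderiv ℝ k x (A x)) μ := by
  have h : tsupport (fun x ↦ fderiv ℝ k x (A x)) ⊆ tsupport k := by
    refine (closure_mono ?_).trans (tsupport_fderiv_subset ℝ)
    exact Function.support_subset_iff'.2 fun x hx ↦ by simp [Function.notMem_support.1 hx]
  simp_rw [mul_comm (w _)]
  refine Continuous.integrable_of_hasCompactSupport ?_
    (HasCompactSupport.mul_right (hkc.of_isClosed_subset (isClosed_tsupport _) h))
  exact continuous_mul_of_continuousAt_tsupport (continuous_fderiv_apply_linearMap hk A)
    fun x hx ↦ hw x (h hx)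

theorem integral_mul_fderiv_apply_linearMap_of_eigen (A : E →ₗ[ℝ] E) {w k : E → ℝ} {c : ℝ}
    (hk : ContDiff ℝ 1 k) (hkc : HasCompactSupport k) (hw : ∀ x ∈ tsupport k, ContDiffAt ℝ 1 w x)
    (hwA : ∀ x ∈ tsupport k, fderiv ℝ w x (A x) = c * w x) :
    ∫ x, w x * fderiv ℝ k x (A x) ∂μ =
      -(LinearMap.trace ℝ E A + c) * ∫ x, w x * k x ∂μ := by
  have hkw : ContDiff ℝ 1 fun x ↦ k x * w x := contDiff_mul_of_contDiffAt_tsupport hk hw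
  have hprod (x : E) : fderiv ℝ (fun x ↦ k x * w x) x (A x) =
      w x * fderiv ℝ k x (A x) + c * (w x * k x) := by
    by_cases hx : x ∈ tsupport k
    · rw [fderiv_fun_mul (hk.differentiable one_ne_zero x)
        ((hw x hx).differentiableAt one_ne_zero)]
      simp only [add_apply, smul_apply, smul_eq_mul, hwA x hx]
      ring
    · have hkw_zero : (fun x ↦ k x * w x) =ᶠ[nhds x] 0 := by
        filter_upwards [notMem_tsupport_iff_eventuallyEq.mp hx] with y hy
        simp [hy]
      rw [hkw_zero.fderiv_eq, fderiv_of_notMem_tsupport ℝ hx, image_eq_zero_of_notMem_tsupport hx]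
      simp
  have h := integral_fderiv_apply_linearMap μ A hkw hkc.mul_right
  simp_rw [hprod, mul_comm (k _)] at h
  rw [integral_add, integral_const_mul] at h
  · linear_combination h
  · exact integrable_mul_fderiv_apply_linearMap μ A hk hkc fun x hx ↦ (hw x hx).continuousAt
  · simp_rw [mul_comm (w _)]
    exact (hkw.continuous.integrable_of_hasCompactSupport hkc.mul_right).const_mul c

end LinearVectorField

section HorizontalVectors

variable {n : ℕ}

/-- Horizontal vectors as elements of the Euclidean space `ℝ²ⁿ`: the product norm of
`(Fin n → ℝ) × (Fin n → ℝ)` is a supremum norm, and this map turns `hNorm` and `hDot` into the norm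
and the inner product of an inner product space. -/
def hEuclidean (n : ℕ) :
    ((Fin n → ℝ) × (Fin n → ℝ)) ≃L[ℝ] EuclideanSpace ℝ (Fin n ⊕ Fin n) :=
  (ContinuousLinearEquiv.sumPiEquivProdPi ℝ (Fin n) (Fin n) fun _ ↦ ℝ).symm.trans
    (EuclideanSpace.equiv (Fin n ⊕ Fin n) ℝ).symm

/-- The complex structure `J(x, y) = (y, -x)` on horizontal vectors. -/
def hJ (v : (Fin n → ℝ) × (Fin n → ℝ)) : (Fin n → ℝ) × (Fin n → ℝ) := (v.2, -v.1)

theorem norm_hEuclidean (v : (Fin n → ℝ) × (Fin n → ℝ)) : ‖hEuclidean n v‖ = hNorm v := by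
  rw [EuclideanSpace.norm_eq, Fintype.sum_sum_type]
  simp only [Real.norm_eq_abs, sq_abs]
  rfl

theorem inner_hEuclidean (v w : (Fin n → ℝ) × (Fin n → ℝ)) :
    inner ℝ (hEuclidean n v) (hEuclidean n w) = hDot v w := by
  rw [real_inner_comm, PiLp.inner_apply, Fintype.sum_sum_type]
  rfl

theorem hNorm_nonneg (v : (Fin n → ℝ) × (Fin n → ℝ)) : 0 ≤ hNorm v := Real.sqrt_nonneg _

theorem hNorm_smul (c : ℝ) (v : (Fin n → ℝ) × (Fin n → ℝ)) : hNorm (c • v) = |c| * hNorm v := by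
  rw [← norm_hEuclidean, map_smul, norm_smul, norm_hEuclidean, Real.norm_eq_abs]

theorem continuous_hNorm : Continuous (hNorm : (Fin n → ℝ) × (Fin n → ℝ) → ℝ) :=
  (hEuclidean n).continuous.norm.congr norm_hEuclidean

theorem abs_hDot_le (v w : (Fin n → ℝ) × (Fin n → ℝ)) : |hDot v w| ≤ hNorm v * hNorm w := by
  simpa only [inner_hEuclidean, norm_hEuclidean] using
    abs_real_inner_le_norm (hEuclidean n v) (hEuclidean n w)

theorem hDot_self (v : (Fin n → ℝ) × (Fin n → ℝ)) : hDot v v = hNorm v ^ 2 := by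
  rw [← inner_hEuclidean, real_inner_self_eq_norm_sq, norm_hEuclidean]

theorem hDot_add_right (u v w : (Fin n → ℝ) × (Fin n → ℝ)) :
    hDot u (v + w) = hDot u v + hDot u w := by
  simp only [← inner_hEuclidean, map_add, inner_add_right]

theorem hDot_smul_right (c : ℝ) (v w : (Fin n → ℝ) × (Fin n → ℝ)) :
    hDot v (c • w) = c * hDot v w := by
  simp only [← inner_hEuclidean, map_smul, real_inner_smul_right]

theorem hDot_hJ_right (v : (Fin n → ℝ) × (Fin n → ℝ)) : hDot v (hJ v) = 0 := by
  simp [hDot, hJ, mul_comm]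

theorem hDot_comm (v w : (Fin n → ℝ) × (Fin n → ℝ)) : hDot v w = hDot w v := by
  simp only [hDot, mul_comm]

theorem hNorm_hJ (v : (Fin n → ℝ) × (Fin n → ℝ)) : hNorm (hJ v) = hNorm v := by
  simp [hNorm, hJ, add_comm]

theorem hNorm_smul_add_smul_hJ_sq (a b : ℝ) (v : (Fin n → ℝ) × (Fin n → ℝ)) :
    hNorm (a • v + b • hJ v) ^ 2 = (a ^ 2 + b ^ 2) * hNorm v ^ 2 := by
  have h := norm_add_sq_real (a • hEuclidean n v) (b • hEuclidean n (hJ v))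
  simp only [← map_smul, ← map_add, norm_hEuclidean, inner_hEuclidean, hNorm_smul] at h
  rw [h, hDot_smul_right, hDot_comm, hDot_smul_right, hDot_comm, hDot_hJ_right, hNorm_hJ,
    mul_pow, mul_pow, sq_abs, sq_abs]
  ring

end HorizontalVectors

section HorizontalGradient

variable {n : ℕ} {k : Heis n → ℝ} {ξ : Heis n}

/-- The horizontal component `z = (x, y)` of a point `ξ = (x, y, t)`. -/
def hProj (n : ℕ) : Heis n →L[ℝ] (Fin n → ℝ) × (Fin n → ℝ) :=
  (ContinuousLinearMap.fst ℝ _ _).prod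
    ((ContinuousLinearMap.fst ℝ _ _).comp (ContinuousLinearMap.snd ℝ _ _))

theorem hDot_hGrad (v : (Fin n → ℝ) × (Fin n → ℝ)) (k : Heis n → ℝ) (ξ : Heis n) :
    hDot v (hGrad k ξ) = fderiv ℝ k ξ (v.1, v.2, 2 * hDot (hJ (hProj n ξ)) v) := by
  set L : Heis n →ₗ[ℝ] ℝ := (fderiv ℝ k ξ).toLinearMap
  have sum_single (T : (Fin n → ℝ) →ₗ[ℝ] ℝ) (u : Fin n → ℝ) :
      T u = ∑ j, u j * T (Pi.single j 1) := by
    conv_lhs => rw [← (Pi.basisFun ℝ (Fin n)).sum_repr u]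
    simp
  have hx : L (v.1, 0, 0) = ∑ j, v.1 j * L (Pi.single j 1, 0, 0) :=
    sum_single (L ∘ₗ LinearMap.inl ℝ _ _) v.1
  have hy : L (0, v.2, 0) = ∑ j, v.2 j * L (0, Pi.single j 1, 0) :=
    sum_single (L ∘ₗ LinearMap.inr ℝ _ _ ∘ₗ LinearMap.inl ℝ _ _) v.2
  have ht (c : ℝ) : L (0, 0, c) = c * L (0, 0, 1) := by
    rw [← smul_eq_mul, ← map_smul]
    simp
  have hsplit (c : ℝ) : ((v.1, v.2, c) : Heis n) = (v.1, 0, 0) + (0, v.2, 0) + (0, 0, c) := by simp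
  change _ = L _
  rw [hsplit, map_add, map_add, hx, hy, ht]
  change ∑ j, v.1 j * (L _ + 2 * ξ.2.1 j * L _) + ∑ j, v.2 j * (L _ - 2 * ξ.1 j * L _) =
    _ + 2 * (∑ j, ξ.2.1 j * v.1 j + ∑ j, -ξ.1 j * v.2 j) * L (0, 0, 1)
  simp only [Finset.mul_sum, Finset.sum_mul, ← Finset.sum_add_distrib]
  refine Finset.sum_congr rfl fun j _ ↦ ?_
  ring

theorem hGrad_comp {φ : ℝ → ℝ} {φ' : ℝ} (hφ : HasDerivAt φ φ' (k ξ))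
    (hk : DifferentiableAt ℝ k ξ) : hGrad (fun η ↦ φ (k η)) ξ = φ' • hGrad k ξ := by
  have h : fderiv ℝ (fun η ↦ φ (k η)) ξ = φ' • fderiv ℝ k ξ :=
    (hφ.comp_hasFDerivAt ξ hk.hasFDerivAt).fderiv
  ext j <;> simp [hGrad, XH, YH, h] <;> ring

theorem tsupport_hNorm_hGrad_subset (k : Heis n → ℝ) :
    tsupport (fun ξ ↦ hNorm (hGrad k ξ)) ⊆ tsupport k := by
  refine (closure_mono (Function.support_subset_iff'.2 fun ξ hξ ↦ ?_)).trans
    (tsupport_fderiv_subset ℝ)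
  simp [hNorm, hGrad, XH, YH, Function.notMem_support.1 hξ]

theorem continuous_hGrad (hk : ContDiff ℝ 1 k) : Continuous (hGrad k) := by
  have (v : Heis n) : Continuous fun ξ ↦ fderiv ℝ k ξ v :=
    (hk.continuous_fderiv one_ne_zero).clm_apply continuous_const
  unfold hGrad XH YH
  fun_prop

end HorizontalGradient

section Gauge

variable {n : ℕ} {r s : ℝ} {ξ : Heis n}

theorem zNorm_eq (ξ : Heis n) : zNorm ξ = hNorm (hProj n ξ) := rfl

theorem zNorm_eq_norm (ξ : Heis n) : zNorm ξ = ‖hEuclidean n (hProj n ξ)‖ := by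
  rw [zNorm_eq, norm_hEuclidean]

theorem zNorm_nonneg (ξ : Heis n) : 0 ≤ zNorm ξ := Real.sqrt_nonneg _

theorem zNorm_eq_zero : zNorm ξ = 0 ↔ hProj n ξ = 0 := by
  rw [zNorm_eq_norm, norm_eq_zero, map_eq_zero_iff _ (hEuclidean n).injective]

theorem continuous_zNorm : Continuous (zNorm : Heis n → ℝ) :=
  continuous_hNorm.comp (hProj n).continuous

theorem dH_eq (ξ : Heis n) : dH ξ = (zNorm ξ ^ 4 + ξ.2.2 ^ 2) ^ (1 / 4 : ℝ) := by
  have h : zNorm ξ ^ 2 = ∑ j, ξ.1 j ^ 2 + ∑ j, ξ.2.1 j ^ 2 := Real.sq_sqrt (by positivity)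
  rw [dH, ← h]
  ring_nf

theorem dH_nonneg (ξ : Heis n) : 0 ≤ dH ξ := by
  rw [dH_eq]
  positivity

theorem dH_pow_four (ξ : Heis n) : dH ξ ^ 4 = zNorm ξ ^ 4 + ξ.2.2 ^ 2 := by
  rw [dH_eq, ← Real.rpow_natCast, ← Real.rpow_mul (by positivity)]
  norm_num

theorem dH_rpow (ξ : Heis n) (s : ℝ) : dH ξ ^ s = (zNorm ξ ^ 4 + ξ.2.2 ^ 2) ^ (s / 4) := by
  rw [dH_eq, ← Real.rpow_mul (by positivity)]
  ring_nf

theorem dH_pos (hξ : ξ ≠ 0) : 0 < dH ξ := by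
  refine (dH_nonneg ξ).lt_of_ne' fun hd ↦ hξ ?_
  have hsum : zNorm ξ ^ 4 + ξ.2.2 ^ 2 = 0 := by rw [← dH_pow_four, hd]; norm_num
  have hz : zNorm ξ = 0 := by
    have : zNorm ξ ^ 4 = 0 := by nlinarith [sq_nonneg ξ.2.2, sq_nonneg (zNorm ξ ^ 2)]
    simpa using this
  have ht : ξ.2.2 = 0 := by simpa [hz] using hsum
  have hp := zNorm_eq_zero.1 hz
  have hx : ξ.1 = 0 := congrArg Prod.fst hp
  have hy : ξ.2.1 = 0 := congrArg Prod.snd hp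
  exact Prod.ext hx (Prod.ext hy ht)

theorem continuous_dH : Continuous (dH : Heis n → ℝ) := by
  simp_rw [funext dH_eq]
  exact ((continuous_zNorm.pow 4).add (by fun_prop)).rpow_const fun _ ↦ .inr (by norm_num)

theorem contDiff_zNorm_rpow (hr : 1 < r) : ContDiff ℝ 1 fun ξ : Heis n ↦ zNorm ξ ^ r := by
  simp_rw [zNorm_eq_norm]
  exact ((hEuclidean n).contDiff.comp (hProj n).contDiff).norm_rpow hr

theorem contDiff_zNorm_sq : ContDiff ℝ 1 fun ξ : Heis n ↦ zNorm ξ ^ 2 := by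
  simp_rw [zNorm_eq_norm]
  exact ((hEuclidean n).contDiff.comp (hProj n).contDiff).norm_sq ℝ

theorem contDiffAt_dH_rpow (hξ : ξ ≠ 0) (s : ℝ) : ContDiffAt ℝ 1 (fun η ↦ dH η ^ s) ξ := by
  have h4 : ContDiff ℝ 1 fun η : Heis n ↦ zNorm η ^ 4 + η.2.2 ^ 2 := by
    have h := (contDiff_zNorm_sq (n := n)).pow 2
    simp_rw [← pow_mul] at h
    exact h.add (by fun_prop)
  simp_rw [dH_rpow]
  refine h4.contDiffAt.rpow_const_of_ne ?_
  rw [← dH_pow_four]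
  exact (pow_pos (dH_pos hξ) 4).ne'

theorem continuous_zNorm_rpow_mul_dH_rpow_mul {u : Heis n → ℝ} (hu : Continuous u)
    (h0 : 0 ∉ tsupport u) (hr : 0 ≤ r) (s : ℝ) :
    Continuous fun ξ ↦ zNorm ξ ^ r * dH ξ ^ s * u ξ := by
  simp_rw [mul_comm _ (u _)]
  exact continuous_mul_of_continuousAt_tsupport hu fun ξ hξ ↦
    (continuous_zNorm.continuousAt.rpow_const (.inr hr)).mul
      (contDiffAt_dH_rpow (ne_of_mem_of_not_mem hξ h0) s).continuousAt

theorem memLp_zNorm_rpow_mul_dH_rpow_mul {u : Heis n → ℝ} (hu : Continuous u)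
    (huc : HasCompactSupport u) (h0 : 0 ∉ tsupport u) (hr : 0 ≤ r) (s : ℝ) (m : ENNReal) :
    MemLp (fun ξ ↦ zNorm ξ ^ r * dH ξ ^ s * u ξ) m :=
  (continuous_zNorm_rpow_mul_dH_rpow_mul hu h0 hr s).memLp_of_hasCompactSupport huc.mul_left

theorem memLp_mul_hNorm_hGrad {k : Heis n → ℝ} (hk : ContDiff ℝ 1 k) (hkc : HasCompactSupport k)
    (h0 : 0 ∉ tsupport k) (hr : 0 ≤ r) (s : ℝ) (m : ENNReal) :
    MemLp (fun ξ ↦ zNorm ξ ^ r * dH ξ ^ s * hNorm (hGrad k ξ)) m := by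
  have hsupp := tsupport_hNorm_hGrad_subset k
  exact memLp_zNorm_rpow_mul_dH_rpow_mul (continuous_hNorm.comp (continuous_hGrad hk))
    (hkc.of_isClosed_subset (isClosed_tsupport _) hsupp) (fun h ↦ h0 (hsupp h)) hr s m

end Gauge

section Symmetries

variable {n : ℕ} {r s c : ℝ} {w : Heis n → ℝ} {ξ : Heis n}

/-- The Heisenberg dilation `(z, t) ↦ (ρz, ρ²t)`. -/
def hDilation (ρ : ℝ) (ξ : Heis n) : Heis n := (ρ • ξ.1, ρ • ξ.2.1, ρ ^ 2 * ξ.2.2)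

/-- The generator `z ∂_z + 2t ∂_t` of the Heisenberg dilations. -/
def dilationField (n : ℕ) : Heis n →ₗ[ℝ] Heis n :=
  LinearMap.id.prodMap (LinearMap.id.prodMap ((2 : ℝ) • LinearMap.id))

/-- The generator `(x, y, t) ↦ (y, -x, 0)` of the rotations of the `z`-space about the `t`-axis. -/
def rotationField (n : ℕ) : Heis n →ₗ[ℝ] Heis n :=
  LinearMap.inl ℝ _ _ ∘ₗ LinearMap.fst ℝ _ _ ∘ₗ LinearMap.snd ℝ _ _ -
    (LinearMap.inr ℝ _ _ ∘ₗ LinearMap.inl ℝ _ _) ∘ₗ LinearMap.fst ℝ _ _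

theorem zNorm_hDilation {ρ : ℝ} (hρ : 0 ≤ ρ) (ξ : Heis n) :
    zNorm (hDilation ρ ξ) = ρ * zNorm ξ := by
  have h : hProj n (hDilation ρ ξ) = ρ • hProj n ξ := rfl
  rw [zNorm_eq, h, hNorm_smul, abs_of_nonneg hρ, zNorm_eq]

theorem dH_hDilation {ρ : ℝ} (hρ : 0 ≤ ρ) (ξ : Heis n) : dH (hDilation ρ ξ) = ρ * dH ξ := by
  rw [← pow_left_inj₀ (dH_nonneg _) (mul_nonneg hρ (dH_nonneg ξ)) four_ne_zero, mul_pow,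
    dH_pow_four, dH_pow_four, zNorm_hDilation hρ, hDilation]
  ring

theorem dilationField_apply (ξ : Heis n) : dilationField n ξ = (ξ.1, ξ.2.1, 2 * ξ.2.2) := rfl

theorem rotationField_apply (ξ : Heis n) : rotationField n ξ = (ξ.2.1, -ξ.1, 0) := by
  simp [rotationField]

theorem rotationField_eq_zero (hξ : zNorm ξ = 0) : rotationField n ξ = 0 := by
  have hz := zNorm_eq_zero.1 hξ
  have hx : ξ.1 = 0 := congrArg Prod.fst hz
  have hy : ξ.2.1 = 0 := congrArg Prod.snd hz
  rw [rotationField_apply, hx, hy, neg_zero]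
  rfl

theorem trace_dilationField (n : ℕ) : LinearMap.trace ℝ (Heis n) (dilationField n) = 2 * n + 2 := by
  simp only [dilationField, LinearMap.trace_prodMap', LinearMap.trace_id, map_smul,
    Module.finrank_fin_fun, Module.finrank_self, smul_eq_mul]
  push_cast
  ring

theorem trace_rotationField (n : ℕ) : LinearMap.trace ℝ (Heis n) (rotationField n) = 0 := by
  have trace_comp_eq_zero (f : (Fin n → ℝ) →ₗ[ℝ] Heis n) (g : Heis n →ₗ[ℝ] (Fin n → ℝ))
      (h : g ∘ₗ f = 0) : LinearMap.trace ℝ (Heis n) (f ∘ₗ g) = 0 := by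
    rw [LinearMap.trace_comp_comm', h, map_zero]
  rw [rotationField, map_sub, trace_comp_eq_zero _ _ rfl, trace_comp_eq_zero _ _ rfl, sub_zero]

theorem fderiv_dilationField_of_homogeneous (hw : DifferentiableAt ℝ w ξ)
    (hhom : ∀ ρ > 0, w (hDilation ρ ξ) = ρ ^ c * w ξ) :
    fderiv ℝ w ξ (dilationField n ξ) = c * w ξ := by
  have hδ_one : hDilation 1 ξ = ξ := by simp [hDilation]
  have hδ : HasDerivAt (hDilation · ξ) (dilationField n ξ) 1 := by
    have hid := hasDerivAt_id (1 : ℝ)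
    simpa [hDilation, dilationField_apply] using (hid.smul_const ξ.1).prodMk
      ((hid.smul_const ξ.2.1).prodMk ((hid.pow 2).mul_const ξ.2.2))
  have hcurve : HasDerivAt (w ∘ (hDilation · ξ)) (fderiv ℝ w ξ (dilationField n ξ)) 1 :=
    HasFDerivAt.comp_hasDerivAt 1 (hδ_one.symm ▸ hw.hasFDerivAt) hδ
  have hpow : HasDerivAt (fun ρ : ℝ ↦ ρ ^ c * w ξ) (c * w ξ) 1 := by
    simpa using (Real.hasDerivAt_rpow_const (p := c) (.inl one_ne_zero)).mul_const (w ξ)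
  refine hcurve.unique (hpow.congr_of_eventuallyEq ?_)
  filter_upwards [eventually_gt_nhds one_pos] with ρ hρ using hhom ρ hρ

theorem fderiv_rotationField_of_invariant (hw : DifferentiableAt ℝ w ξ)
    (hinv : ∀ η, zNorm η = zNorm ξ → η.2.2 = ξ.2.2 → w η = w ξ) :
    fderiv ℝ w ξ (rotationField n ξ) = 0 := by
  let γ (θ : ℝ) : Heis n :=
    (cos θ • ξ.1 + sin θ • ξ.2.1, cos θ • ξ.2.1 + sin θ • -ξ.1, ξ.2.2)
  have hγ_zero : γ 0 = ξ := by simp [γ]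
  have hγ : HasDerivAt γ (rotationField n ξ) 0 := by
    have hcos := hasDerivAt_cos 0
    have hsin := hasDerivAt_sin 0
    simpa [γ, rotationField_apply] using
      ((hcos.smul_const ξ.1).add (hsin.smul_const ξ.2.1)).prodMk
        (((hcos.smul_const ξ.2.1).add (hsin.smul_const (-ξ.1))).prodMk
          (hasDerivAt_const 0 ξ.2.2))
  have hnorm (θ : ℝ) : zNorm (γ θ) = zNorm ξ := by
    refine (sq_eq_sq₀ (zNorm_nonneg _) (zNorm_nonneg _)).1 ?_
    have h : hProj n (γ θ) = cos θ • hProj n ξ + sin θ • hJ (hProj n ξ) := rfl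
    rw [zNorm_eq, h, hNorm_smul_add_smul_hJ_sq, cos_sq_add_sin_sq, one_mul, zNorm_eq]
  have hcurve : HasDerivAt (w ∘ γ) (fderiv ℝ w ξ (rotationField n ξ)) 0 :=
    HasFDerivAt.comp_hasDerivAt 0 (hγ_zero.symm ▸ hw.hasFDerivAt) hγ
  exact hcurve.unique
    ((hasDerivAt_const 0 (w ξ)).congr_of_eventuallyEq (.of_forall fun θ ↦ hinv _ (hnorm θ) rfl))

instance : (volume : Measure (Heis n)).IsAddHaarMeasure :=
  have : (volume : Measure ((Fin n → ℝ) × ℝ)).IsAddHaarMeasure :=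
    Measure.prod.instIsAddHaarMeasure _ _
  Measure.prod.instIsAddHaarMeasure _ _

variable {k : Heis n → ℝ}

theorem integral_mul_fderiv_dilationField (hk : ContDiff ℝ 1 k) (hkc : HasCompactSupport k)
    (h0 : 0 ∉ tsupport k) (hr : 1 < r) (s : ℝ) :
    ∫ ξ, zNorm ξ ^ r * dH ξ ^ s * fderiv ℝ k ξ (dilationField n ξ) =
      -(2 * n + 2 + (r + s)) * ∫ ξ, zNorm ξ ^ r * dH ξ ^ s * k ξ := by
  have hw (ξ) (hξ : ξ ∈ tsupport k) :
      ContDiffAt ℝ 1 (fun η : Heis n ↦ zNorm η ^ r * dH η ^ s) ξ :=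
    (contDiff_zNorm_rpow hr).contDiffAt.mul
      (contDiffAt_dH_rpow (ne_of_mem_of_not_mem hξ h0) s)
  rw [← trace_dilationField]
  refine integral_mul_fderiv_apply_linearMap_of_eigen volume _ hk hkc hw fun ξ hξ ↦ ?_
  refine fderiv_dilationField_of_homogeneous ((hw ξ hξ).differentiableAt one_ne_zero) fun ρ hρ ↦ ?_
  rw [zNorm_hDilation hρ.le, dH_hDilation hρ.le, Real.mul_rpow hρ.le (zNorm_nonneg ξ),
    Real.mul_rpow hρ.le (dH_nonneg ξ), Real.rpow_add hρ]
  ring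

end Symmetries

section DivergenceIdentity

variable {n : ℕ} {r s : ℝ} {k : Heis n → ℝ}

/-- The horizontal vector field `|z|² z + t Jz = d³ ∇_H d`. -/
def gaugeField (ξ : Heis n) : (Fin n → ℝ) × (Fin n → ℝ) :=
  zNorm ξ ^ 2 • hProj n ξ + ξ.2.2 • hJ (hProj n ξ)

theorem hNorm_gaugeField (ξ : Heis n) : hNorm (gaugeField ξ) = zNorm ξ * dH ξ ^ 2 := by
  rw [← sq_eq_sq₀ (hNorm_nonneg _) (mul_nonneg (zNorm_nonneg ξ) (sq_nonneg _)), gaugeField,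
    hNorm_smul_add_smul_hJ_sq, ← zNorm_eq]
  linear_combination -zNorm ξ ^ 2 * dH_pow_four ξ

theorem hDot_gaugeField_hGrad (k : Heis n → ℝ) (ξ : Heis n) :
    hDot (gaugeField ξ) (hGrad k ξ) =
      zNorm ξ ^ 2 * fderiv ℝ k ξ (dilationField n ξ) +
        ξ.2.2 * fderiv ℝ k ξ (rotationField n ξ) := by
  have ht : hDot (hJ (hProj n ξ)) (gaugeField ξ) = ξ.2.2 * zNorm ξ ^ 2 := by
    rw [gaugeField, hDot_add_right, hDot_smul_right, hDot_smul_right, hDot_comm, hDot_hJ_right,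
      hDot_self, hNorm_hJ, ← zNorm_eq, mul_zero, zero_add]
  have hv : (((gaugeField ξ).1, (gaugeField ξ).2, 2 * (ξ.2.2 * zNorm ξ ^ 2)) : Heis n) =
      zNorm ξ ^ 2 • dilationField n ξ + ξ.2.2 • rotationField n ξ := by
    rw [dilationField_apply, rotationField_apply]
    ext j <;> simp [gaugeField, hProj, hJ]
    ring
  rw [hDot_hGrad, ht, hv, map_add, map_smul, map_smul, smul_eq_mul, smul_eq_mul]

theorem integral_regularized_mul_fderiv_rotationField_eq_zero (hk : ContDiff ℝ 1 k)
    (hkc : HasCompactSupport k) (h0 : 0 ∉ tsupport k) (hr : 1 < r) (s : ℝ) {ε : ℝ} (hε : 0 < ε) :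
    ∫ ξ, zNorm ξ ^ r / (zNorm ξ ^ 2 + ε) * dH ξ ^ s * ξ.2.2 *
      fderiv ℝ k ξ (rotationField n ξ) = 0 := by
  have hw (ξ) (hξ : ξ ∈ tsupport k) : ContDiffAt ℝ 1
      (fun η : Heis n ↦ zNorm η ^ r / (zNorm η ^ 2 + ε) * dH η ^ s * η.2.2) ξ :=
    (((contDiff_zNorm_rpow hr).contDiffAt.div (contDiff_zNorm_sq.contDiffAt.add contDiffAt_const)
      (by positivity)).mul (contDiffAt_dH_rpow (ne_of_mem_of_not_mem hξ h0) s)).mul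
      (by fun_prop)
  have h := integral_mul_fderiv_apply_linearMap_of_eigen volume (rotationField n) (c := 0)
    hk hkc hw fun ξ hξ ↦ ?_
  · simpa only [trace_rotationField, add_zero, neg_zero, zero_mul] using h
  · rw [zero_mul]
    refine fderiv_rotationField_of_invariant ((hw ξ hξ).differentiableAt one_ne_zero)
      fun η hz ht ↦ ?_
    simp only [dH_rpow, hz, ht]

theorem abs_mul_hDot_gaugeField_hGrad_le (hr : 1 < r) (s : ℝ) (k : Heis n → ℝ) (ξ : Heis n) :
    |zNorm ξ ^ (r - 2) * dH ξ ^ s * hDot (gaugeField ξ) (hGrad k ξ)| ≤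
      zNorm ξ ^ (r - 1) * dH ξ ^ (s + 2) * hNorm (hGrad k ξ) := by
  rcases eq_or_ne ξ 0 with rfl | hξ
  · have hz : zNorm (0 : Heis n) = 0 := zNorm_eq_zero.2 (map_zero _)
    simp [gaugeField, hDot, hz, Real.zero_rpow (sub_pos.2 hr).ne']
  have hw : 0 ≤ zNorm ξ ^ (r - 2) * dH ξ ^ s :=
    mul_nonneg (Real.rpow_nonneg (zNorm_nonneg ξ) _) (Real.rpow_nonneg (dH_nonneg ξ) _)
  rw [abs_mul, abs_of_nonneg hw, ← rpow_sub_two_mul_self (zNorm_nonneg ξ) hr,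
    Real.rpow_add (dH_pos hξ), Real.rpow_two]
  refine (mul_le_mul_of_nonneg_left (abs_hDot_le _ _) hw).trans_eq ?_
  rw [hNorm_gaugeField]
  ring

theorem integrable_mul_hDot_gaugeField_hGrad (hk : ContDiff ℝ 1 k) (hkc : HasCompactSupport k)
    (h0 : 0 ∉ tsupport k) (hr : 1 < r) (s : ℝ) :
    Integrable fun ξ ↦ zNorm ξ ^ (r - 2) * dH ξ ^ s * hDot (gaugeField ξ) (hGrad k ξ) := by
  have hmeas : Measurable fun ξ ↦ hDot (gaugeField ξ) (hGrad k ξ) := by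
    simp_rw [hDot_gaugeField_hGrad]
    exact (((continuous_zNorm.pow 2).mul (continuous_fderiv_apply_linearMap hk _)).add
      (continuous_snd.snd.mul (continuous_fderiv_apply_linearMap hk _))).measurable
  refine (memLp_one_iff_integrable.1 <|
    memLp_mul_hNorm_hGrad hk hkc h0 (sub_pos.2 hr).le (s + 2) 1).mono' ?_
    (.of_forall (abs_mul_hDot_gaugeField_hGrad_le hr s k))
  exact (((continuous_zNorm.measurable.pow_const _).mul
    (continuous_dH.measurable.pow_const _)).mul hmeas).aestronglyMeasurable

theorem mul_hDot_gaugeField_hGrad (hr : 1 < r) (s : ℝ) (k : Heis n → ℝ) (ξ : Heis n) :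
    zNorm ξ ^ (r - 2) * dH ξ ^ s * hDot (gaugeField ξ) (hGrad k ξ) =
      zNorm ξ ^ r * dH ξ ^ s * fderiv ℝ k ξ (dilationField n ξ) +
        zNorm ξ ^ (r - 2) * dH ξ ^ s * ξ.2.2 * fderiv ℝ k ξ (rotationField n ξ) := by
  rw [hDot_gaugeField_hGrad, ← rpow_sub_two_mul_sq (zNorm_nonneg ξ) (by positivity : r ≠ 0)]
  ring

theorem integrable_mul_fderiv_dilationField (hk : ContDiff ℝ 1 k) (hkc : HasCompactSupport k)
    (h0 : 0 ∉ tsupport k) (hr : 0 ≤ r) (s : ℝ) :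
    Integrable fun ξ ↦ zNorm ξ ^ r * dH ξ ^ s * fderiv ℝ k ξ (dilationField n ξ) :=
  integrable_mul_fderiv_apply_linearMap volume _ hk hkc fun _ hξ ↦
    (continuous_zNorm.continuousAt.rpow_const (.inr hr)).mul
      (contDiffAt_dH_rpow (ne_of_mem_of_not_mem hξ h0) s).continuousAt

theorem integrable_mul_fderiv_rotationField (hk : ContDiff ℝ 1 k) (hkc : HasCompactSupport k)
    (h0 : 0 ∉ tsupport k) (hr : 1 < r) (s : ℝ) :
    Integrable fun ξ ↦
      zNorm ξ ^ (r - 2) * dH ξ ^ s * ξ.2.2 * fderiv ℝ k ξ (rotationField n ξ) := by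
  refine ((integrable_mul_hDot_gaugeField_hGrad hk hkc h0 hr s).sub
    (integrable_mul_fderiv_dilationField hk hkc h0 (by positivity) s)).congr (.of_forall fun ξ ↦ ?_)
  simp only [Pi.sub_apply, mul_hDot_gaugeField_hGrad hr, add_sub_cancel_left]

theorem integral_mul_fderiv_rotationField_eq_zero (hk : ContDiff ℝ 1 k)
    (hkc : HasCompactSupport k) (h0 : 0 ∉ tsupport k) (hr : 1 < r) (s : ℝ) :
    ∫ ξ, zNorm ξ ^ (r - 2) * dH ξ ^ s * ξ.2.2 * fderiv ℝ k ξ (rotationField n ξ) = 0 := by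
  have hlim : Filter.Tendsto (fun ε ↦ ∫ ξ, zNorm ξ ^ r / (zNorm ξ ^ 2 + ε) * dH ξ ^ s * ξ.2.2 *
      fderiv ℝ k ξ (rotationField n ξ)) (nhdsWithin 0 (Set.Ioi 0))
      (nhds (∫ ξ, zNorm ξ ^ (r - 2) * dH ξ ^ s * ξ.2.2 * fderiv ℝ k ξ (rotationField n ξ))) := by
    refine tendsto_integral_filter_of_dominated_convergence _ ?_ ?_
      (integrable_mul_fderiv_rotationField hk hkc h0 hr s).norm ?_
    · refine .of_forall fun ε ↦ Measurable.aestronglyMeasurable ?_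
      exact ((((continuous_zNorm.measurable.pow_const r).div
        ((continuous_zNorm.measurable.pow_const 2).add_const ε)).mul
        (continuous_dH.measurable.pow_const s)).mul measurable_snd.snd).mul
        (continuous_fderiv_apply_linearMap hk _).measurable
    · filter_upwards [self_mem_nhdsWithin] with ε (hε : 0 < ε)
      refine .of_forall fun ξ ↦ ?_
      have hz := zNorm_nonneg ξ
      simp only [norm_mul]
      gcongr
      rw [Real.norm_of_nonneg (by positivity), Real.norm_of_nonneg (by positivity)]
      exact rpow_div_sq_add_le hz (by positivity) hε
    · refine .of_forall fun ξ ↦ ?_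
      rcases (zNorm_nonneg ξ).eq_or_lt' with hz | hz
      · simp [rotationField_eq_zero hz]
      · exact (((tendsto_rpow_div_sq_add hz r).mul_const _).mul_const _).mul_const _
  refine tendsto_nhds_unique hlim (tendsto_const_nhds.congr' ?_)
  filter_upwards [self_mem_nhdsWithin] with ε hε using
    (integral_regularized_mul_fderiv_rotationField_eq_zero hk hkc h0 hr s hε).symm

theorem integral_mul_hDot_gaugeField_hGrad (hk : ContDiff ℝ 1 k) (hkc : HasCompactSupport k)
    (h0 : 0 ∉ tsupport k) (hr : 1 < r) (s : ℝ) :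
    ∫ ξ, zNorm ξ ^ (r - 2) * dH ξ ^ s * hDot (gaugeField ξ) (hGrad k ξ) =
      -(2 * n + 2 + (r + s)) * ∫ ξ, zNorm ξ ^ r * dH ξ ^ s * k ξ := by
  simp_rw [mul_hDot_gaugeField_hGrad hr]
  rw [integral_add (integrable_mul_fderiv_dilationField hk hkc h0 (by positivity) s)
    (integrable_mul_fderiv_rotationField hk hkc h0 hr s),
    integral_mul_fderiv_dilationField hk hkc h0 hr,
    integral_mul_fderiv_rotationField_eq_zero hk hkc h0 hr, add_zero]

theorem abs_mul_abs_integral_le_integral_hNorm_hGrad (hk : ContDiff ℝ 1 k)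
    (hkc : HasCompactSupport k) (h0 : 0 ∉ tsupport k) (hr : 1 < r) (s : ℝ) :
    |2 * n + 2 + (r + s)| * |∫ ξ, zNorm ξ ^ r * dH ξ ^ s * k ξ| ≤
      ∫ ξ, zNorm ξ ^ (r - 1) * dH ξ ^ (s + 2) * hNorm (hGrad k ξ) := by
  rw [← abs_mul, ← abs_neg, ← neg_mul, ← integral_mul_hDot_gaugeField_hGrad hk hkc h0 hr]
  exact norm_integral_le_of_norm_le
    (memLp_one_iff_integrable.1 <|
      memLp_mul_hNorm_hGrad hk hkc h0 (sub_pos.2 hr).le (s + 2) 1)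
    (.of_forall fun _ ↦ (norm_eq_abs _).trans_le (abs_mul_hDot_gaugeField_hGrad_le hr s k _))

end DivergenceIdentity

section Hardy

variable {n : ℕ} {p q r : ℝ} {f : Heis n → ℝ}

theorem tsupport_abs_rpow_subset (f : Heis n → ℝ) (hr : r ≠ 0) :
    tsupport (fun ξ ↦ |f ξ| ^ r) ⊆ tsupport f :=
  closure_mono <| Function.support_subset_iff'.2 fun ξ hξ ↦ by
    simp [Function.notMem_support.1 hξ, hr]

theorem hNorm_hGrad_abs_rpow {ξ : Heis n} (hf : DifferentiableAt ℝ f ξ) (hp : 1 < p) :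
    hNorm (hGrad (fun η ↦ |f η| ^ p) ξ) = p * (|f ξ| ^ (p - 1) * hNorm (hGrad f ξ)) := by
  have hp0 : 0 < p := by positivity
  rw [hGrad_comp (hasDerivAt_abs_rpow (f ξ) hp) hf, hNorm_smul, abs_mul, abs_mul,
    abs_of_pos hp0, abs_of_nonneg (by positivity : 0 ≤ |f ξ| ^ (p - 2)), mul_assoc p,
    rpow_sub_two_mul_self (abs_nonneg _) hp, mul_assoc]

theorem abs_div_mul_integral_abs_rpow_le (hf : ContDiff ℝ 1 f) (hfc : HasCompactSupport f)
    (h0 : 0 ∉ tsupport f) (hp : 1 < p) (s : ℝ) :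
    |2 * n + 2 + (p + s)| / p * ∫ ξ, zNorm ξ ^ p * dH ξ ^ s * |f ξ| ^ p ≤
      ∫ ξ, zNorm ξ ^ (p - 1) * dH ξ ^ (s + 2) * (|f ξ| ^ (p - 1) * hNorm (hGrad f ξ)) := by
  have hp0 : 0 < p := by positivity
  have hsupp := tsupport_abs_rpow_subset f hp0.ne'
  have hk : ContDiff ℝ 1 fun ξ ↦ |f ξ| ^ p := hf.norm_rpow hp
  have h := abs_mul_abs_integral_le_integral_hNorm_hGrad hk
    (hfc.of_isClosed_subset (isClosed_tsupport _) hsupp) (fun h ↦ h0 (hsupp h)) hp s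
  simp_rw [hNorm_hGrad_abs_rpow (hf.differentiable one_ne_zero _) hp, mul_left_comm _ p] at h
  rw [integral_const_mul] at h
  rw [div_mul_eq_mul_div, div_le_iff₀' hp0]
  exact (mul_le_mul_of_nonneg_left (le_abs_self _) (abs_nonneg _)).trans h

theorem memLp_mul_abs_rpow (hf : Continuous f) (hfc : HasCompactSupport f) (h0 : 0 ∉ tsupport f)
    {r' : ℝ} (hr : 0 ≤ r) (s : ℝ) (hr' : 0 < r') (m : ENNReal) :
    MemLp (fun ξ ↦ zNorm ξ ^ r * dH ξ ^ s * |f ξ| ^ r') m := by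
  have hsupp := tsupport_abs_rpow_subset f hr'.ne'
  exact memLp_zNorm_rpow_mul_dH_rpow_mul (hf.abs.rpow_const fun _ ↦ .inr hr'.le)
    (hfc.of_isClosed_subset (isClosed_tsupport _) hsupp) (fun h ↦ h0 (hsupp h)) hr s m

theorem interpolation_hardy_Heisenberg (hpq : p.HolderConjugate q) (hf : ContDiff ℝ 1 f)
    (hfc : HasCompactSupport f) (h0 : 0 ∉ tsupport f) (β γ : ℝ) :
    |2 * n + 2 + (p + (β + γ - 2))| / p *
        ∫ ξ, zNorm ξ ^ p * dH ξ ^ (β + γ - 2) * |f ξ| ^ p ≤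
      (∫ ξ, dH ξ ^ (β * p) * hNorm (hGrad f ξ) ^ p) ^ (1 / p) *
        (∫ ξ, zNorm ξ ^ p * dH ξ ^ (γ * q) * |f ξ| ^ p) ^ (1 / q) := by
  have hp1 : 0 < p - 1 := hpq.sub_one_pos
  let u (ξ : Heis n) : ℝ := zNorm ξ ^ (0 : ℝ) * dH ξ ^ β * hNorm (hGrad f ξ)
  let v (ξ : Heis n) : ℝ := zNorm ξ ^ (p - 1) * dH ξ ^ γ * |f ξ| ^ (p - 1)
  have hz (ξ : Heis n) (b : ℝ) : 0 ≤ zNorm ξ ^ b := Real.rpow_nonneg (zNorm_nonneg ξ) b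
  have hd (ξ : Heis n) (b : ℝ) : 0 ≤ dH ξ ^ b := Real.rpow_nonneg (dH_nonneg ξ) b
  have hu (ξ) : 0 ≤ u ξ := mul_nonneg (mul_nonneg (hz ξ _) (hd ξ _)) (hNorm_nonneg _)
  have hv (ξ) : 0 ≤ v ξ := mul_nonneg (mul_nonneg (hz ξ _) (hd ξ _)) (by positivity)
  have huv (ξ) : zNorm ξ ^ (p - 1) * dH ξ ^ (β + γ) * (|f ξ| ^ (p - 1) * hNorm (hGrad f ξ)) =
      u ξ * v ξ := by
    rcases eq_or_ne ξ 0 with rfl | hξ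
    · simp [v, image_eq_zero_of_notMem_tsupport h0, Real.zero_rpow hp1.ne']
    · simp only [u, v, Real.rpow_add (dH_pos hξ), Real.rpow_zero]
      ring
  have hup (ξ) : u ξ ^ p = dH ξ ^ (β * p) * hNorm (hGrad f ξ) ^ p := by
    simp only [u, Real.rpow_zero, one_mul]
    rw [Real.mul_rpow (hd ξ _) (hNorm_nonneg _), ← Real.rpow_mul (dH_nonneg ξ)]
  have hvq (ξ) : v ξ ^ q = zNorm ξ ^ p * dH ξ ^ (γ * q) * |f ξ| ^ p := by
    simp only [v]
    rw [Real.mul_rpow (mul_nonneg (hz ξ _) (hd ξ _)) (by positivity),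
      Real.mul_rpow (hz ξ _) (hd ξ _), ← Real.rpow_mul (zNorm_nonneg ξ),
      ← Real.rpow_mul (dH_nonneg ξ), ← Real.rpow_mul (abs_nonneg _), hpq.sub_one_mul_conj]
  have hL1 := abs_div_mul_integral_abs_rpow_le hf hfc h0 hpq.lt (β + γ - 2)
  have holder := integral_mul_le_Lp_mul_Lq_of_nonneg hpq (.of_forall hu) (.of_forall hv)
    (memLp_mul_hNorm_hGrad hf hfc h0 le_rfl β _)
    (memLp_mul_abs_rpow hf.continuous hfc h0 hp1.le γ hp1 _)
  simp_rw [sub_add_cancel, huv] at hL1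
  simp_rw [hup, hvq] at holder
  exact hL1.trans holder

theorem hardy_special_case_vi_Heisenberg_general {a : ℝ} (hpq : p.HolderConjugate q)
    (hf : ContDiff ℝ 1 f) (hfc : HasCompactSupport f) (h0 : 0 ∉ tsupport f) :
    |2 * n + 2 - a * p| / p *
        ∫ ξ : Heis n, zNorm ξ ^ p / dH ξ ^ p * (|f ξ| ^ p / dH ξ ^ (a * p)) ≤
      (∫ ξ : Heis n, hNorm (hGrad f ξ) ^ p / dH ξ ^ (a * p)) ^ (1 / p) *
        (∫ ξ : Heis n, zNorm ξ ^ p / dH ξ ^ p * (|f ξ| ^ p / dH ξ ^ (a * p)) *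
          dH ξ ^ q) ^ (1 / q) := by
  have hf0 : |f 0| ^ p = 0 := by
    rw [image_eq_zero_of_notMem_tsupport h0, abs_zero, Real.zero_rpow hpq.pos.ne']
  have hleft (ξ : Heis n) : zNorm ξ ^ p / dH ξ ^ p * (|f ξ| ^ p / dH ξ ^ (a * p)) =
      zNorm ξ ^ p * dH ξ ^ (-p - a * p) * |f ξ| ^ p := by
    rcases eq_or_ne ξ 0 with rfl | hξ
    · simp [hf0]
    · rw [Real.rpow_sub (dH_pos hξ), Real.rpow_neg (dH_nonneg ξ)]
      ring
  have hright (ξ : Heis n) : zNorm ξ ^ p * dH ξ ^ (-p - a * p) * |f ξ| ^ p * dH ξ ^ q =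
      zNorm ξ ^ p * dH ξ ^ (-p - a * p + q) * |f ξ| ^ p := by
    rcases eq_or_ne ξ 0 with rfl | hξ
    · simp [hf0]
    · rw [Real.rpow_add (dH_pos hξ)]
      ring
  have hgrad (ξ : Heis n) : hNorm (hGrad f ξ) ^ p / dH ξ ^ (a * p) =
      dH ξ ^ (-a * p) * hNorm (hGrad f ξ) ^ p := by
    rw [neg_mul, Real.rpow_neg (dH_nonneg ξ), div_eq_inv_mul]
  have hQ : 2 * n + 2 + (p + (-p - a * p)) = 2 * n + 2 - a * p := by ring
  have hs : -a + (1 - (a + 1) * (p - 1)) - 2 = -p - a * p := by ring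
  have hγ : (1 - (a + 1) * (p - 1)) * q = -p - a * p + q := by
    linear_combination -(a + 1) * hpq.sub_one_mul_conj
  have h := interpolation_hardy_Heisenberg hpq hf hfc h0 (-a) (1 - (a + 1) * (p - 1))
  rw [hs, hQ, hγ] at h
  simpa only [hleft, hright, hgrad] using h

end Hardy

/-- Corollary 2.3 (vi): the case `a + b + 1 = ap` of the
interpolation Hardy inequality on `ℍⁿ`. -/
theorem hardy_special_case_vi_Heisenberg
    (n : ℕ) (p q a : ℝ) (hp : 1 < p) (hpQ : p < 2 * n + 2)
    (hQ : (2 * n + 2 : ℝ) ≠ a * p) (hpq : 1 / p + 1 / q = 1)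
    (f : Heis n → ℝ) (hf : IsTestAwayZero f) :
    |2 * n + 2 - a * p| / p *
        ∫ ξ : Heis n, zNorm ξ ^ p / dH ξ ^ p * (|f ξ| ^ p / dH ξ ^ (a * p)) ≤
      (∫ ξ : Heis n, hNorm (hGrad f ξ) ^ p / dH ξ ^ (a * p)) ^ (1 / p) *
        (∫ ξ : Heis n, zNorm ξ ^ p / dH ξ ^ p * (|f ξ| ^ p / dH ξ ^ (a * p)) *
          dH ξ ^ q) ^ (1 / q) :=
  hardy_special_case_vi_Heisenberg_general (Real.holderConjugate_iff.2 ⟨hp, by simpa using hpq⟩)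
    (hf.1.of_le (by exact_mod_cast le_top)) hf.2.1 hf.2.2
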